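/- Let G(q) be the Monge metric of the Oriented Associativity equation and on the open set U ⊆ ℝ⁶ where q⁵ ≠ 0 and det G(q) ≠ 0 define g := G⁻¹, c_{nkm} := (1/3)(∂G_{mn}/∂q^k − ∂G_{kn}/∂q^m) and c^s_{ml} := Σ_p g^{sp} c_{pml}. Then G does NOT satisfy the integrability condition for a local third-order homogeneous Hamiltonian operator: there exist indices n, m, l, k ∈ {1,…,6} and a point q ∈ U such that ∂c_{nml}/∂q^k + Σ_s c^s_{ml} c_{snk} ≠ 0. -/

import Mathlib

/-- Partial derivative in direction `k` for functions on `ℝ⁶`. -/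
noncomputable def pd (k : Fin 6) (f : (Fin 6 → ℝ) → ℝ) (x : Fin 6 → ℝ) : ℝ :=
  fderiv ℝ f x (Pi.single k 1)

/-- The Monge metric `G(q)` of the Oriented Associativity equation
(0-based indices: `q i = qⁱ⁺¹`). -/
def G (q : Fin 6 → ℝ) : Matrix (Fin 6) (Fin 6) ℝ :=
  !![2, 0, q 2, -q 4, 2 * q 3, 0;
     0, 0, 2 * q 4, 0, -q 2 + 2 * q 5, -q 4;
     q 2, 2 * q 4, -2 * (q 0 + q 3 * q 4), q 4 * (q 2 - q 5),
       -q 1 + q 3 * (q 2 - q 5), 2 * q 3 * q 4;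
     -q 4, 0, q 4 * (q 2 - q 5), 2 * (q 4) ^ 2,
       -q 0 + q 2 * (-q 2 + 2 * q 5) - 2 * q 3 * q 4 - (q 5) ^ 2, q 4 * (-q 2 + q 5);
     2 * q 3, -q 2 + 2 * q 5, -q 1 + q 3 * (q 2 - q 5),
       -q 0 + q 2 * (-q 2 + 2 * q 5) - 2 * q 3 * q 4 - (q 5) ^ 2, 2 * (q 3) ^ 2,
       -q 1 + q 3 * (-q 2 + q 5);
     0, -q 4, 2 * q 3 * q 4, q 4 * (-q 2 + q 5), -q 1 + q 3 * (-q 2 + q 5),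
       -2 * q 3 * q 4]

/-- Inverse Monge metric `g^{ij} = (G(q)⁻¹)_{ij}`. -/
noncomputable def ginv (q : Fin 6 → ℝ) : Matrix (Fin 6) (Fin 6) ℝ := (G q)⁻¹

/-- The lowered symbols `c_{nkm} = (1/3)(∂G_{mn}/∂q^k − ∂G_{kn}/∂q^m)`. -/
noncomputable def cLow (n k m : Fin 6) (q : Fin 6 → ℝ) : ℝ :=
  (1 / 3) * (pd k (fun x => G x m n) q - pd m (fun x => G x k n) q)

theorem pd_of_line (k : Fin 6) (f : (Fin 6 → ℝ) → ℝ) (x : Fin 6 → ℝ) (c : ℝ)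
    (hf : DifferentiableAt ℝ f x)
    (h : ∀ t : ℝ, f (x + t • (Pi.single k 1 : Fin 6 → ℝ)) = f x + t * c) : pd k f x = c := by
  have h1 : HasLineDerivAt ℝ f (fderiv ℝ f x (Pi.single k 1)) x (Pi.single k 1) :=
    hf.hasFDerivAt.hasLineDerivAt _
  have h2 : HasLineDerivAt ℝ f c x (Pi.single k 1) := by
    unfold HasLineDerivAt
    have : (fun t : ℝ => f (x + t • (Pi.single k 1 : Fin 6 → ℝ))) = fun t => f x + t * c :=
      funext h
    rw [this]
    simpa using ((hasDerivAt_id (0 : ℝ)).mul_const c).const_add (f x)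
  exact h1.lineDeriv.symm.trans h2.lineDeriv

theorem cLow_eq (p : Fin 6) (x : Fin 6 → ℝ) : cLow p 0 2 x = if p = 2 then -1 else 0 := by
  have h1 : pd 0 (fun x => G x 2 p) x = if p = 2 then -2 else 0 := by
    apply pd_of_line
    · fin_cases p <;> simp [G] <;> fun_prop
    · intro t
      fin_cases p <;> simp [G, Pi.single_apply] <;> ring
  have h2 : pd 2 (fun x => G x 0 p) x = if p = 2 then 1 else 0 := by
    apply pd_of_line
    · fin_cases p <;> simp [G] <;> fun_prop
    · intro t
      fin_cases p <;> simp [G, Pi.single_apply]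
  rw [cLow, h1, h2]
  split_ifs <;> norm_num

theorem G_mul : G ![1, 0, 0, 0, 1, 0] *
    !![1/2, 0, 0, 0, -1/2, 0; 0, 0, 0, 0, 0, -1; 0, 0, -1/2, 0, 0, -1; 0, 0, 0, 0, -1, 0;
       -1/2, 0, 0, -1, -3/2, 0; 0, -1, -1, 0, 0, -2] = 1 := by
  ext i j
  fin_cases i <;> fin_cases j <;>
    simp [G, Matrix.mul_apply, Fin.sum_univ_succ, Matrix.one_apply] <;> norm_num

/-- the Monge metric of the Oriented Associativity equation does NOT
satisfy the integrability condition `c_{nml,k} + c^s_{ml} c_{snk} = 0` of a local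
third-order homogeneous Hamiltonian operator: it fails for some indices at some point
of the open set where `q⁵ ≠ 0` and `det G(q) ≠ 0`. -/
theorem statement9 :
    ∃ (n m l k : Fin 6) (q : Fin 6 → ℝ), q 4 ≠ 0 ∧ (G q).det ≠ 0 ∧
      pd k (fun x => cLow n m l x) q
        + ∑ s, (∑ p, ginv q s p * cLow p m l q) * cLow s n k q ≠ 0 := by
  refine ⟨0, 0, 2, 2, ![1, 0, 0, 0, 1, 0], ?_, ?_, ?_⟩
  · simp
  · exact Matrix.det_ne_zero_of_right_inverse G_mul
  · rw [ginv, Matrix.inv_eq_right_inv G_mul]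
    simp [cLow_eq, pd]
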